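/- Let f : ℝ^m → ℝ be twice continuously differentiable, let g(z) = f(z ⊙ z), and let z ∈ ℝ^m with ‖z‖₂ = 1 satisfy the stationarity condition 2 diag(z) ∇f(z ⊙ z) + 2γ z = 0 for some γ ∈ ℝ. Set w = z ⊙ z. Then for every direction d ∈ ℝ^m with d_i = 0 whenever z_i = 0, the second-order quadratic forms of the two problems coincide: dᵀ(∇²g(z) + 2γ I) d = δwᵀ ∇²f(w) δw, where δw = 2 diag(z) d. -/

import Mathlib

open Matrix

/-- The componentwise squaring map `z ↦ z ⊙ z`. -/
noncomputable def hadamardSq {m : ℕ} (z : EuclideanSpace ℝ (Fin m)) :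
    EuclideanSpace ℝ (Fin m) :=
  WithLp.toLp 2 fun i => z i * z i

/-- The Hessian matrix of second partial derivatives of `f` at `x`. -/
noncomputable def hessianMatrix {m : ℕ} (f : EuclideanSpace ℝ (Fin m) → ℝ)
    (x : EuclideanSpace ℝ (Fin m)) : Matrix (Fin m) (Fin m) ℝ :=
  Matrix.of fun i j => gradient (fun y => gradient f y j) x i

lemma gradient_coord {m : ℕ} (f : EuclideanSpace ℝ (Fin m) → ℝ)
    (x : EuclideanSpace ℝ (Fin m)) (j : Fin m) :
    gradient f x j = fderiv ℝ f x (EuclideanSpace.single j 1) := by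
  have h : inner ℝ (gradient f x) (EuclideanSpace.single j (1 : ℝ)) =
      fderiv ℝ f x (EuclideanSpace.single j 1) := by
    simp [gradient, InnerProductSpace.toDual_symm_apply]
  rw [← h, EuclideanSpace.inner_single_right]
  simp

noncomputable def hadamardSqDeriv {m : ℕ} (z : EuclideanSpace ℝ (Fin m)) :
    EuclideanSpace ℝ (Fin m) →L[ℝ] EuclideanSpace ℝ (Fin m) :=
  ∑ i, (2 * z i) • ((EuclideanSpace.proj i : EuclideanSpace ℝ (Fin m) →L[ℝ] ℝ)).smulRight
    (EuclideanSpace.single i (1 : ℝ))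

lemma hadamardSqDeriv_single {m : ℕ} (z : EuclideanSpace ℝ (Fin m)) (j : Fin m) :
    hadamardSqDeriv z (EuclideanSpace.single j 1) =
      (2 * z j) • EuclideanSpace.single j (1 : ℝ) := by
  simp only [hadamardSqDeriv, _root_.sum_apply]
  rw [Finset.sum_eq_single j]
  · simp
  · intro b _ hb
    simp [hb]
  · simp

lemma hasFDerivAt_hadamardSq {m : ℕ} (z : EuclideanSpace ℝ (Fin m)) :
    HasFDerivAt hadamardSq (hadamardSqDeriv z) z := by
  rw [← hasFDerivWithinAt_univ, hasFDerivWithinAt_euclidean]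
  intro i
  have hp : HasFDerivAt (fun y : EuclideanSpace ℝ (Fin m) => y i)
      ((EuclideanSpace.proj i : EuclideanSpace ℝ (Fin m) →L[ℝ] ℝ)) z :=
    ((EuclideanSpace.proj i : EuclideanSpace ℝ (Fin m) →L[ℝ] ℝ)).hasFDerivAt
  rw [hasFDerivWithinAt_univ]
  refine (hp.mul hp).congr_fderiv ?_
  ext v
  simp [hadamardSqDeriv, Finset.sum_apply, Pi.single_apply]
  ring

lemma gradient_comp_hadamardSq {m : ℕ} (f : EuclideanSpace ℝ (Fin m) → ℝ)
    (hf : Differentiable ℝ f) (y : EuclideanSpace ℝ (Fin m)) (j : Fin m) :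
    gradient (fun z => f (hadamardSq z)) y j = 2 * y j * gradient f (hadamardSq y) j := by
  have h := (hf (hadamardSq y)).hasFDerivAt.comp y (hasFDerivAt_hadamardSq y)
  have h2 : HasFDerivAt (fun z => f (hadamardSq z)) _ y := h
  rw [gradient_coord, gradient_coord, h2.fderiv, ContinuousLinearMap.comp_apply,
    hadamardSqDeriv_single, map_smul, smul_eq_mul]

lemma hessian_comp_hadamardSq {m : ℕ} (f : EuclideanSpace ℝ (Fin m) → ℝ)
    (hf : ContDiff ℝ 2 f) (z : EuclideanSpace ℝ (Fin m)) (i j : Fin m) :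
    hessianMatrix (fun z => f (hadamardSq z)) z i j =
      (if i = j then 2 * gradient f (hadamardSq z) j else 0) +
        (2 * z i) * (2 * z j) * hessianMatrix f (hadamardSq z) i j := by
  have hf1 : Differentiable ℝ f := hf.differentiable (by norm_num)
  have hG : Differentiable ℝ (fun y => gradient f y j) := by
    simp only [gradient_coord]
    have h1 : ContDiff ℝ 1 (fderiv ℝ f) := hf.fderiv_right (by norm_num)
    exact (h1.differentiable (by norm_num)).clm_apply (differentiable_const _)
  simp only [hessianMatrix, Matrix.of_apply, gradient_comp_hadamardSq f hf1]
  have hp : HasFDerivAt (fun y : EuclideanSpace ℝ (Fin m) => 2 * y j)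
      ((2 : ℝ) • (EuclideanSpace.proj j : EuclideanSpace ℝ (Fin m) →L[ℝ] ℝ)) z :=
    ((EuclideanSpace.proj j : EuclideanSpace ℝ (Fin m) →L[ℝ] ℝ)).hasFDerivAt.const_mul 2
  have hc : HasFDerivAt (fun y => gradient f (hadamardSq y) j) _ z :=
    (hG (hadamardSq z)).hasFDerivAt.comp z (hasFDerivAt_hadamardSq z)
  have hm : HasFDerivAt (fun y => 2 * y j * gradient f (hadamardSq y) j) _ z := hp.mul hc
  rw [gradient_coord, hm.fderiv, gradient_coord (fun y => gradient f y j)]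
  simp only [_root_.add_apply, _root_.smul_apply,
    ContinuousLinearMap.comp_apply, hadamardSqDeriv_single, map_smul, smul_eq_mul]
  by_cases h : i = j
  · subst h
    simp
    ring
  · simp [h, Ne.symm h]
    ring

/-- At a stationary point `z` of the sphere problem, for every direction `d`
vanishing where `z` vanishes, the second-order quadratic form of the sphere
problem, `dᵀ(∇²g(z) + 2γI)d` with `g(z) = f(z ⊙ z)`, equals the second-order
quadratic form `δwᵀ ∇²f(w) δw` of the simplex problem, where `w = z ⊙ z` and
`δw = 2 diag(z) d`. -/
theorem second_order_quadratic_forms_agree (m : ℕ)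
    (f : EuclideanSpace ℝ (Fin m) → ℝ) (hf : ContDiff ℝ 2 f)
    (z : EuclideanSpace ℝ (Fin m)) (γ : ℝ) (hz : ‖z‖ = 1)
    (hstat : ∀ i, 2 * z i * gradient f (hadamardSq z) i + 2 * γ * z i = 0)
    (d : Fin m → ℝ) (hd : ∀ i, z i = 0 → d i = 0) :
    d ⬝ᵥ ((hessianMatrix (fun z => f (hadamardSq z)) z + (2 * γ) • (1 : Matrix (Fin m) (Fin m) ℝ)) *ᵥ d) =
      (fun i => 2 * z i * d i) ⬝ᵥ (hessianMatrix f (hadamardSq z) *ᵥ fun i => 2 * z i * d i) := by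
  have key : ∀ i j, d i * ((hessianMatrix (fun z => f (hadamardSq z)) z +
      (2 * γ) • (1 : Matrix (Fin m) (Fin m) ℝ)) i j * d j) =
      2 * z i * d i * (hessianMatrix f (hadamardSq z) i j * (2 * z j * d j)) := by
    intro i j
    rw [Matrix.add_apply, Matrix.smul_apply, hessian_comp_hadamardSq f hf, Matrix.one_apply]
    by_cases h : i = j
    · subst h
      by_cases hzi : z i = 0
      · simp [hd i hzi]
      · have hg : gradient f (hadamardSq z) i = -γ := by
          have h1 := hstat i
          apply mul_left_cancel₀ hzi
          linarith
        simp [hg]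
        ring
    · simp [h]
      ring
  simp only [dotProduct, Matrix.mulVec, Finset.mul_sum]
  exact Finset.sum_congr rfl fun i _ => Finset.sum_congr rfl fun j _ => key i j
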